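/- Let K be a natural number, a ∈ ℝ, and c, w, b, c_p ∈ ℝ^K. Define û(x) = Σ_{k=1}^K c_k tanh(w_k x + b_k), p̂(x) = Σ_{k=1}^K c_{p,k} tanh(w_k x + b_k), and the transformed PDE loss L̃_F(c, w, b, c_p) = (1/(2π)) ∫₀^{2π} [ (p̂′(x) + a² sin(a x))² + (p̂(x) − û′(x))² ] dx. Then for every index k, the partial derivative of L̃_F with respect to b_k satisfies |∂L̃_F/∂b_k| ≤ 12 (Σ_{j=1}^K |c_{p,j}| + Σ_{j=1}^K max(|c_j|, |c_{p,j}|) |w_j| + a²) · max(|c_k|, |c_{p,k}|) · max(|w_k|, 1). -/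

import Mathlib

/-!
The derivative of a function is bounded by any Lipschitz constant of it, so it suffices to show
that the loss is Lipschitz in `b k` with the claimed constant; the loss need not be differentiated
under the integral sign.

Since `tanh' = 1 - tanh²` is bounded by `1` and Lipschitz with constant `2`
(`abs_tanhDeriv_le`, `tanhDeriv_lipschitz`), both residuals `p̂' + a² sin (a x)` and `p̂ - û'` are
bounded uniformly in `x` and in the biases, and are Lipschitz in `b k` uniformly in `x`, because
only the `k`-th neuron changes (`abs_sum_update_sub_le`). A difference of squares
`A² - B² = (A - B) (A + B)` turns these bounds into a Lipschitz bound for the integrand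
(`abs_sq_sub_sq_le`), with constant
`4 (M + a²) m + 6 (S + M) m ≤ 12 (S + M + a²) m`, where `S = ∑ |c_p j|`,
`M = ∑ max (|c j|, |c_p j|) |w j|` and `m = max (|c k|, |c_p k|) max (|w k|, 1)`.
Averaging over `[0, 2π]` keeps the constant.
-/

/-- The derivative `1 - tanh²` of `tanh`. -/
noncomputable def tanhDeriv (x : ℝ) : ℝ := 1 - Real.tanh x ^ 2

theorem hasDerivAt_tanh' (x : ℝ) : HasDerivAt Real.tanh (tanhDeriv x) x := by
  have hc : Real.cosh x ≠ 0 := (Real.cosh_pos x).ne'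
  have h := (Real.hasDerivAt_sinh x).div (Real.hasDerivAt_cosh x) hc
  have e : Real.tanh = Real.sinh / Real.cosh := by
    ext y; simp [Real.tanh_eq_sinh_div_cosh]
  have h' : tanhDeriv x
      = (Real.cosh x * Real.cosh x - Real.sinh x * Real.sinh x) / Real.cosh x ^ 2 := by
    rw [tanhDeriv, Real.tanh_eq_sinh_div_cosh]
    field_simp
  rw [h', e]
  exact h

theorem continuous_tanh' : Continuous Real.tanh :=
  continuous_iff_continuousAt.2 fun x => (hasDerivAt_tanh' x).continuousAt

theorem continuous_tanhDeriv : Continuous tanhDeriv :=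
  continuous_const.sub (continuous_tanh'.pow 2)

theorem abs_tanh_le (x : ℝ) : |Real.tanh x| ≤ 1 := (Real.abs_tanh_lt_one x).le

theorem abs_tanhDeriv_le (x : ℝ) : |tanhDeriv x| ≤ 1 := by
  have h : Real.tanh x ^ 2 ≤ 1 := (sq_le_one_iff_abs_le_one _).2 (abs_tanh_le x)
  rw [tanhDeriv, abs_le]
  constructor <;> nlinarith [sq_nonneg (Real.tanh x)]

theorem tanh_lipschitz (x y : ℝ) : |Real.tanh x - Real.tanh y| ≤ 1 * |x - y| := by
  have h := Convex.norm_image_sub_le_of_norm_hasDerivWithin_le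
    (f := Real.tanh) (f' := tanhDeriv) (C := 1) (s := Set.univ) (x := y) (y := x)
    (fun z _ => (hasDerivAt_tanh' z).hasDerivWithinAt)
    (fun z _ => abs_tanhDeriv_le z) convex_univ trivial trivial
  simpa using h

theorem tanhDeriv_lipschitz (x y : ℝ) : |tanhDeriv x - tanhDeriv y| ≤ 2 * |x - y| := by
  have e : tanhDeriv x - tanhDeriv y
      = (Real.tanh y + Real.tanh x) * (Real.tanh y - Real.tanh x) := by
    simp only [tanhDeriv]; ring
  rw [e, abs_mul]
  have h1 : |Real.tanh y + Real.tanh x| ≤ 2 := by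
    linarith [abs_add_le (Real.tanh y) (Real.tanh x), abs_tanh_le x, abs_tanh_le y]
  have h2 := tanh_lipschitz x y
  rw [abs_sub_comm (Real.tanh x), one_mul] at h2
  exact mul_le_mul h1 h2 (abs_nonneg _) (by norm_num)

theorem deriv_network {K : ℕ} (c w b : Fin K → ℝ) (x : ℝ) :
    deriv (fun y => ∑ k, c k * Real.tanh (w k * y + b k)) x
      = ∑ k, c k * w k * tanhDeriv (w k * x + b k) := by
  have h : HasDerivAt (fun y => ∑ k, c k * Real.tanh (w k * y + b k))
      (∑ k, c k * (tanhDeriv (w k * x + b k) * (w k * 1))) x := by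
    refine HasDerivAt.fun_sum fun k _ => HasDerivAt.const_mul _ ?_
    exact (hasDerivAt_tanh' (w k * x + b k)).comp x
      (((hasDerivAt_id x).const_mul (w k)).add_const (b k))
  rw [h.deriv]
  exact Finset.sum_congr rfl fun k _ => by ring

theorem abs_sum_mul_le {K : ℕ} (d w b : Fin K → ℝ) (x : ℝ) {φ : ℝ → ℝ}
    (hφ : ∀ y, |φ y| ≤ 1) : |∑ j, d j * φ (w j * x + b j)| ≤ ∑ j, |d j| := by
  refine (Finset.abs_sum_le_sum_abs _ _).trans (Finset.sum_le_sum fun j _ => ?_)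
  rw [abs_mul]
  exact mul_le_of_le_one_right (abs_nonneg _) (hφ _)

/-- Moving the single bias `b k` changes only the `k`-th neuron. -/
theorem abs_sum_update_sub_le {K : ℕ} (d w b : Fin K → ℝ) (k : Fin K) (x s t C : ℝ) {φ : ℝ → ℝ}
    (hφ : ∀ y z, |φ y - φ z| ≤ C * |y - z|) :
    |(∑ j, d j * φ (w j * x + Function.update b k s j))
      - ∑ j, d j * φ (w j * x + Function.update b k t j)| ≤ |d k| * (C * |s - t|) := by
  rw [← Finset.sum_sub_distrib, Finset.sum_eq_single k]
  · simp only [Function.update_self]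
    rw [← mul_sub, abs_mul]
    refine mul_le_mul_of_nonneg_left ?_ (abs_nonneg _)
    have h := hφ (w k * x + s) (w k * x + t)
    rwa [add_sub_add_left_eq_sub] at h
  · intro j _ hj
    simp [Function.update_of_ne hj]
  · simp

theorem abs_sq_sub_sq_le {A B R D : ℝ} (hA : |A| ≤ R) (hB : |B| ≤ R) (hD : |A - B| ≤ D) :
    |A ^ 2 - B ^ 2| ≤ D * (2 * R) := by
  have e : A ^ 2 - B ^ 2 = (A - B) * (A + B) := by ring
  rw [e, abs_mul]
  exact mul_le_mul hD (by linarith [abs_add_le A B]) (abs_nonneg _) ((abs_nonneg _).trans hD)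


/-- Theorem 4.1 (Appendix A.7.2), b-component, transformed PDE (extra fields):
for the loss `L̃_F(c,w,b,c_p) = (1/(2π)) ∫₀^{2π} [(p̂′(x) + a² sin(a x))²
+ (p̂(x) - û′(x))²] dx` with `û = ∑ k, c k * tanh (w k * x + b k)` and
`p̂ = ∑ k, c_p k * tanh (w k * x + b k)`, the partial derivative with respect
to `b k` satisfies `|∂L̃_F/∂b_k| ≤ 12 (∑ j |c_p j| + ∑ j max(|c j|,|c_p j|) |w j| + a²) · max(|c k|,|c_p k|) · max(|w k|,1)`. -/
theorem stmt_16 (K : ℕ) (a : ℝ) (c w b cp : Fin K → ℝ)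
    (L : (Fin K → ℝ) → (Fin K → ℝ) → (Fin K → ℝ) → (Fin K → ℝ) → ℝ)
    (hL : ∀ c' w' b' cp', L c' w' b' cp' =
      (1 / (2 * Real.pi)) * ∫ x in (0:ℝ)..(2 * Real.pi),
        ((deriv (fun y => ∑ k, cp' k * Real.tanh (w' k * y + b' k)) x
            + a ^ 2 * Real.sin (a * x)) ^ 2
         + ((∑ k, cp' k * Real.tanh (w' k * x + b' k))
            - deriv (fun y => ∑ k, c' k * Real.tanh (w' k * y + b' k)) x) ^ 2))
    (k : Fin K) :
    |deriv (fun t => L c w (Function.update b k t) cp) (b k)| ≤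
      12 * ((∑ j, |cp j|) + (∑ j, max |c j| |cp j| * |w j|) + a ^ 2) *
        (max |c k| |cp k| * max |w k| 1) := by
  set S := ∑ j, |cp j| with hS
  set M := ∑ j, max |c j| |cp j| * |w j| with hM
  set m := max |c k| |cp k| * max |w k| 1 with hm
  have hS0 : 0 ≤ S := Finset.sum_nonneg fun j _ => abs_nonneg _
  have hM0 : 0 ≤ M := Finset.sum_nonneg fun j _ => by positivity
  have hm0 : 0 ≤ m := by positivity
  have hcpM : ∑ j, |cp j * w j| ≤ M := Finset.sum_le_sum fun j _ => by
    rw [abs_mul]; gcongr; exact le_max_right _ _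
  have hcM : ∑ j, |c j * w j| ≤ M := Finset.sum_le_sum fun j _ => by
    rw [abs_mul]; gcongr; exact le_max_left _ _
  have hk1 : |cp k * w k| ≤ m := by
    rw [abs_mul, hm]; gcongr; exacts [le_max_right _ _, le_max_left _ _]
  have hk2 : |c k * w k| ≤ m := by
    rw [abs_mul, hm]; gcongr; exacts [le_max_left _ _, le_max_left _ _]
  have hk3 : |cp k| ≤ m := by
    rw [← mul_one |cp k|, hm]; gcongr; exacts [le_max_right _ _, le_max_right _ _]
  set A : ℝ → ℝ → ℝ := fun t x =>
    (∑ j, cp j * w j * tanhDeriv (w j * x + Function.update b k t j))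
      + a ^ 2 * Real.sin (a * x) with hA
  set B : ℝ → ℝ → ℝ := fun t x =>
    (∑ j, cp j * Real.tanh (w j * x + Function.update b k t j))
      - ∑ j, c j * w j * tanhDeriv (w j * x + Function.update b k t j) with hB
  have hLt : ∀ t, L c w (Function.update b k t) cp =
      (1 / (2 * Real.pi)) * ∫ x in (0:ℝ)..(2 * Real.pi), (A t x ^ 2 + B t x ^ 2) := by
    intro t
    rw [hL]
    simp only [deriv_network, hA, hB]
  have hAb : ∀ t x, |A t x| ≤ M + a ^ 2 := by
    intro t x
    refine (abs_add_le _ _).trans (add_le_add ?_ ?_)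
    · exact (abs_sum_mul_le (fun j => cp j * w j) w _ x abs_tanhDeriv_le).trans hcpM
    · rw [abs_mul, abs_of_nonneg (sq_nonneg a)]
      exact mul_le_of_le_one_right (sq_nonneg a) (Real.abs_sin_le_one _)
  have hBb : ∀ t x, |B t x| ≤ S + M := by
    intro t x
    refine (abs_sub _ _).trans (add_le_add ?_ ?_)
    · exact abs_sum_mul_le cp w _ x abs_tanh_le
    · exact (abs_sum_mul_le (fun j => c j * w j) w _ x abs_tanhDeriv_le).trans hcM
  have hAl : ∀ s t x, |A s x - A t x| ≤ 2 * m * |s - t| := by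
    intro s t x
    have h := abs_sum_update_sub_le (fun j => cp j * w j) w b k x s t 2 tanhDeriv_lipschitz
    simp only [hA, add_sub_add_right_eq_sub]
    refine h.trans ?_
    calc |cp k * w k| * (2 * |s - t|) ≤ m * (2 * |s - t|) := by gcongr
      _ = 2 * m * |s - t| := by ring
  have hBl : ∀ s t x, |B s x - B t x| ≤ 3 * m * |s - t| := by
    intro s t x
    have h1 := abs_sum_update_sub_le cp w b k x s t 1 tanh_lipschitz
    have h2 := abs_sum_update_sub_le (fun j => c j * w j) w b k x s t 2 tanhDeriv_lipschitz
    simp only [hB]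
    rw [sub_sub_sub_comm]
    refine (abs_sub _ _).trans ((add_le_add h1 h2).trans ?_)
    calc |cp k| * (1 * |s - t|) + |c k * w k| * (2 * |s - t|)
        ≤ m * (1 * |s - t|) + m * (2 * |s - t|) := by gcongr
      _ = 3 * m * |s - t| := by ring
  have hcont : ∀ t, Continuous fun x => A t x ^ 2 + B t x ^ 2 := by
    intro t
    have h1 := continuous_tanh'
    have h2 := continuous_tanhDeriv
    simp only [hA, hB]
    fun_prop
  set C := 12 * (S + M + a ^ 2) * m with hC
  have hC0 : 0 ≤ C := by positivity
  have hF : ∀ s t x, |(A s x ^ 2 + B s x ^ 2) - (A t x ^ 2 + B t x ^ 2)| ≤ C * |s - t| := by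
    intro s t x
    have h1 := abs_sq_sub_sq_le (hAb s x) (hAb t x) (hAl s t x)
    have h2 := abs_sq_sub_sq_le (hBb s x) (hBb t x) (hBl s t x)
    rw [add_sub_add_comm]
    refine (abs_add_le _ _).trans ((add_le_add h1 h2).trans ?_)
    have h3 : 0 ≤ (6 * S + 2 * M + 8 * a ^ 2) * m * |s - t| := by positivity
    rw [hC]
    linarith
  have hlip : ∀ s t, |L c w (Function.update b k s) cp - L c w (Function.update b k t) cp|
      ≤ C * |s - t| := by
    intro s t
    have hpi : 0 < 2 * Real.pi := by positivity
    rw [hLt, hLt, ← mul_sub, ← intervalIntegral.integral_sub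
      ((hcont s).intervalIntegrable _ _) ((hcont t).intervalIntegrable _ _), abs_mul,
      abs_of_pos (by positivity : 0 < 1 / (2 * Real.pi))]
    have h := intervalIntegral.norm_integral_le_of_norm_le_const
      (a := 0) (b := 2 * Real.pi) (C := C * |s - t|)
      (f := fun x => (A s x ^ 2 + B s x ^ 2) - (A t x ^ 2 + B t x ^ 2)) (fun x _ => hF s t x)
    rw [Real.norm_eq_abs, sub_zero, abs_of_pos hpi] at h
    calc _ ≤ 1 / (2 * Real.pi) * (C * |s - t| * (2 * Real.pi)) := by gcongr
      _ = C * |s - t| := by field_simp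
  exact norm_deriv_le_of_lip' (f := fun t => L c w (Function.update b k t) cp) (x₀ := b k) hC0
    (Filter.Eventually.of_forall fun t => hlip t (b k))
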